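/- For every positive integer k divisible by 4, there exists a set of 2·C(k, k/2) dipole words, each of length 20k+3, that attractively encodes the canonical signed 2·C(k, k/2)-glue function, where C(k, k/2) is the binomial coefficient k choose k/2. -/

import Mathlib

/-- The alphabet Σ = {0, 1, ⋄} of dipole letters. -/
inductive Dip : Type
  | zero : Dip
  | one : Dip
  | blank : Dip
  deriving DecidableEq

open Dip

/-- The force between a pair of letters: 1 if {x,y} = {0,1}, -1 if x = y ∈ {0,1}, 0 otherwise. -/
def lf : Dip → Dip → ℤ
  | zero, one => 1
  | one, zero => 1
  | zero, zero => -1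
  | one, one => -1
  | _, _ => 0

/-- The force between a pair of equal-length words: the sum of letterwise forces. -/
def force (X Y : List Dip) : ℤ := (List.zipWith lf X Y).sum

/-- The length-`i` suffix of a word. -/
def sufx (X : List Dip) (i : ℕ) : List Dip := X.drop (X.length - i)

/-- A pair of equal-length words `X`, `Y` is aligned provided `f(X,Y) ≤ 0` and all proper
prefix/suffix overlaps with `Y` and its reverse have non-positive force. -/
def aligned (X Y : List Dip) : Prop :=
  force X Y ≤ 0 ∧
    ∀ A ∈ [Y, Y.reverse], ∀ i, 1 ≤ i → i ≤ X.length - 1 →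
      force (X.take i) (sufx A i) ≤ 0 ∧ force (sufx X i) (A.take i) ≤ 0

/-- The words `W 1, …, W k` attractively encode the `k`-glue function `g`: every pair is
aligned and `f(Wᵢ, Rev(Wⱼ)) > 0` iff `g i j > 0`. -/
def attEncodes (k : ℕ) (W : ℕ → List Dip) (g : ℕ → ℕ → ℤ) : Prop :=
  (∀ i ∈ Finset.Icc 1 k, ∀ j ∈ Finset.Icc 1 k, aligned (W i) (W j)) ∧
    ∀ i ∈ Finset.Icc 1 k, ∀ j ∈ Finset.Icc 1 k,
      (0 < force (W i) ((W j).reverse) ↔ 0 < g i j)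

-- The canonical signed `2k`-glue function: `g i j = 1` if `{i,j} = {2a-1, 2a}` for some
-- `a ∈ {1,…,k}`, and `0` otherwise.
open Classical in
noncomputable def signedGlue (k : ℕ) (i j : ℕ) : ℤ :=
  if ∃ a ∈ Finset.Icc 1 k, (i = 2 * a - 1 ∧ j = 2 * a) ∨ (i = 2 * a ∧ j = 2 * a - 1)
  then 1 else 0

/-!
Read a word of length `2M+1` as a charge distribution `ℤ → {-1, 0, 1}` supported on `[-M, M]`
(`0` carries charge `1`, `1` carries charge `-1`). Then the force between a prefix and a suffix is
minus a correlation of the two distributions, and reversing a word reflects its distribution, so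
all conditions concern signs of correlations at the various shifts.

Let `q = k/2`. To each set `u ⊆ [-q, q]` with `q` elements belong two words. The *probe* has charge
`1` on `u`, at `4q`, and on a run of `q - 1` places near `7q`. The *plate* has charge `1` nearly
everywhere, so that overlaps other than the exact one are repulsive; it has charge `-1` on `u`,
no charge on the rest of `[-q, q]`, and a hole at `4q`. When the probe of `u` lies exactly on the
plate of `v`, its lone charge falls into the hole, and the correlation is `q - 1 - #(u ∩ v)`, which
is negative only if `u = v`. At any other shift, and at every shift over a reversed plate, the
correlation is nonnegative. Plates enter the encoding reversed, so that the attracting overlap is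
the one with the reversed word.
-/

open Finset
open scoped Pointwise

/-! ### Charge distributions and their correlations -/

/-- `F` is a charge distribution on `[-M, M]`: its values are `-1`, `0`, `1`, and it vanishes
outside `[-M, M]`. A dipole word of length `2 * M + 1` is handled as such a distribution, centred
at the origin so that reversal becomes `x ↦ -x`. -/
structure IsCharge (M : ℕ) (F : ℤ → ℤ) : Prop where
  abs_le_one : ∀ x, |F x| ≤ 1
  eq_zero : ∀ x, (M : ℤ) < |x| → F x = 0

/-- The reflection of `F` in the origin, which corresponds to the reversal of a word. -/
def reflection (F : ℤ → ℤ) (x : ℤ) : ℤ := F (-x)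

/-- The correlation of `F` and `G` at shift `s`, which is minus the force between the overlapping
parts of the two words. As a `finsum`, it is `0` if infinitely many products are nonzero, which
does not happen for charge distributions. -/
noncomputable def corr (F G : ℤ → ℤ) (s : ℤ) : ℤ := ∑ᶠ x, F x * G (x + s)

/-- The condition on charge distributions that corresponds to alignment of words: repulsion at
every shift, and against the reflection at every shift except `0`. -/
def IsRepelling (F G : ℤ → ℤ) : Prop :=
  (∀ s, 0 ≤ corr F G s) ∧ ∀ s ≠ 0, 0 ≤ corr F (reflection G) s

section Correlation

variable {M : ℕ} {F G : ℤ → ℤ}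

lemma reflection_reflection (F : ℤ → ℤ) : reflection (reflection F) = F := by
  funext x
  simp only [reflection, neg_neg]

lemma corr_comm (F G : ℤ → ℤ) (s : ℤ) : corr F G s = corr G F (-s) := by
  unfold corr
  rw [← finsum_comp_equiv (Equiv.addRight (-s))]
  refine finsum_congr fun x => ?_
  simp [mul_comm]

lemma corr_reflection_comm (F G : ℤ → ℤ) (s : ℤ) :
    corr F (reflection G) s = corr G (reflection F) s := by
  unfold corr
  rw [← finsum_comp_equiv (Equiv.subLeft (-s))]
  refine finsum_congr fun x => ?_
  simp [reflection, mul_comm, add_comm, sub_eq_add_neg]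

lemma corr_nonneg (hF : ∀ x, 0 ≤ F x) (hG : ∀ x, 0 ≤ G x) (s : ℤ) : 0 ≤ corr F G s :=
  finsum_nonneg fun x => mul_nonneg (hF x) (hG (x + s))

lemma corr_indicator_one (S : Finset ℤ) (G : ℤ → ℤ) (s : ℤ) :
    corr ((S : Set ℤ).indicator 1) G s = ∑ x ∈ S, G (x + s) := by
  rw [← finsum_mem_coe_finset, finsum_mem_def]
  refine finsum_congr fun x => ?_
  by_cases hx : x ∈ (S : Set ℤ) <;> simp [hx]

lemma IsRepelling.symm (h : IsRepelling F G) : IsRepelling G F :=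
  ⟨fun s => corr_comm G F s ▸ h.1 (-s), fun s hs => corr_reflection_comm G F s ▸ h.2 s hs⟩

lemma IsCharge.reflection (hF : IsCharge M F) : IsCharge M (reflection F) :=
  ⟨fun x => hF.abs_le_one (-x), fun x hx => hF.eq_zero (-x) (by rwa [abs_neg])⟩

lemma IsCharge.abs_le_of_ne_zero (hF : IsCharge M F) {x : ℤ} (hx : F x ≠ 0) : |x| ≤ M :=
  not_lt.1 fun h => hx (hF.eq_zero x h)

lemma IsCharge.finite_support_mul (hF : IsCharge M F) (G : ℤ → ℤ) :
    (Function.support fun x => F x * G x).Finite :=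
  (Set.finite_Icc (-(M : ℤ)) M).subset fun _ hx =>
    abs_le.1 (hF.abs_le_of_ne_zero (left_ne_zero_of_mul hx))

lemma corr_eq_sum_range (hF : IsCharge M F) (hG : IsCharge M G) (i : ℕ) :
    corr F G (2 * M + 1 - i) = ∑ n ∈ range i, F (n - M) * G (n + (2 * M + 1 - i) - M) := by
  have hsupp : (Function.support fun x => F x * G (x + (2 * M + 1 - i))) ⊆
      Ico (-(M : ℤ)) (i - M) := fun x hx => by
    have hFx := abs_le.1 (hF.abs_le_of_ne_zero (left_ne_zero_of_mul hx))
    have hGx := abs_le.1 (hG.abs_le_of_ne_zero (right_ne_zero_of_mul hx))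
    rw [coe_Ico, Set.mem_Ico]
    omega
  rw [corr, finsum_eq_sum_of_support_subset _ hsupp]
  refine sum_nbij' (fun x => (x + M).toNat) (fun n => (n : ℤ) - M) ?_ ?_ ?_ ?_ ?_
  all_goals intro x hx; simp only [mem_Ico, mem_range] at hx ⊢
  any_goals omega
  rw [Int.toNat_of_nonneg (by omega)]
  ring_nf

lemma card_sub_card_le_finsum {ι : Type*} {f : ι → ℤ} (hf : f.support.Finite) {A B : Finset ι}
    (hA : ∀ x ∈ A, 1 ≤ f x) (hB : ∀ x ∈ B, -1 ≤ f x) (hnonneg : ∀ x ∉ B, 0 ≤ f x) :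
    (#A : ℤ) - #B ≤ ∑ᶠ x, f x := by
  classical
  set S := hf.toFinset ∪ (A ∪ B)
  have hAS : A ⊆ S := subset_union_left.trans subset_union_right
  have hBS : B ⊆ S := subset_union_right.trans subset_union_right
  have hpointwise : ∀ x ∈ S, ((if x ∈ A then 1 else 0) - if x ∈ B then 1 else 0 : ℤ) ≤ f x := by
    intro x _
    have hAx := hA x
    have hBx := hB x
    have hx := hnonneg x
    split_ifs <;> grind
  calc (#A : ℤ) - #B
      = ∑ x ∈ S, ((if x ∈ A then 1 else 0) - if x ∈ B then 1 else 0 : ℤ) := by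
        rw [sum_sub_distrib, sum_boole, sum_boole, filter_mem_eq_inter, filter_mem_eq_inter,
          inter_eq_right.2 hAS, inter_eq_right.2 hBS]
    _ ≤ ∑ x ∈ S, f x := sum_le_sum hpointwise
    _ = ∑ᶠ x, f x := (finsum_eq_sum_of_support_subset f fun x hx =>
        mem_coe.2 (mem_union_left _ (hf.mem_toFinset.2 hx))).symm

end Correlation

/-! ### The word of a charge distribution -/

/-- The letter with charge `z`: `0` has charge `1`, `1` has charge `-1`, and every value of `z`
other than `1` and `-1` gives `⋄`. -/
def ofCharge (z : ℤ) : Dip := if z = 1 then zero else if z = -1 then one else blank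

/-- The dipole word of length `2 * M + 1` with charges `F (-M), …, F M`. -/
def wordOf (M : ℕ) (F : ℤ → ℤ) : List Dip :=
  (List.range (2 * M + 1)).map fun n : ℕ => ofCharge (F (n - M))

section Word

variable {M : ℕ} {F G : ℤ → ℤ}

lemma lf_ofCharge {a b : ℤ} (ha : |a| ≤ 1) (hb : |b| ≤ 1) :
    lf (ofCharge a) (ofCharge b) = -(a * b) := by
  rcases Int.abs_le_one_iff.1 ha with rfl | rfl | rfl <;>
    rcases Int.abs_le_one_iff.1 hb with rfl | rfl | rfl <;> decide

lemma force_comm (X Y : List Dip) : force X Y = force Y X := by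
  have hlf : (fun x y => lf y x) = lf := by
    funext x y
    cases x <;> cases y <;> rfl
  rw [force, force, List.zipWith_comm, hlf]

lemma force_map_range (f g : ℕ → Dip) (n : ℕ) :
    force ((List.range n).map f) ((List.range n).map g) = ∑ i ∈ range n, lf (f i) (g i) := by
  rw [force, List.zipWith_map, List.zipWith_self, ← List.sum_toFinset _ List.nodup_range,
    List.toFinset_range]

lemma length_wordOf (M : ℕ) (F : ℤ → ℤ) : (wordOf M F).length = 2 * M + 1 := by
  rw [wordOf, List.length_map, List.length_range]

lemma take_wordOf (M : ℕ) (F : ℤ → ℤ) {i : ℕ} (hi : i ≤ 2 * M + 1) :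
    (wordOf M F).take i = (List.range i).map fun n : ℕ => ofCharge (F (n - M)) := by
  rw [wordOf, ← List.map_take, List.take_range, min_eq_left hi]

lemma sufx_wordOf (M : ℕ) (F : ℤ → ℤ) {i : ℕ} (hi : i ≤ 2 * M + 1) :
    sufx (wordOf M F) i =
      (List.range i).map fun n : ℕ => ofCharge (F (n + (2 * M + 1 - i) - M)) := by
  apply List.ext_getElem
  · simp only [sufx, wordOf, List.length_drop, List.length_map, List.length_range]
    omega
  · intro n _ _
    simp only [sufx, wordOf, List.getElem_drop, List.getElem_map, List.getElem_range,
      List.length_map, List.length_range]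
    congr 2
    omega

lemma reverse_wordOf (M : ℕ) (F : ℤ → ℤ) : (wordOf M F).reverse = wordOf M (reflection F) := by
  apply List.ext_getElem
  · simp only [wordOf, List.length_reverse, List.length_map]
  · intro n hn _
    rw [List.length_reverse, length_wordOf] at hn
    simp only [wordOf, reflection, List.getElem_reverse, List.getElem_map, List.getElem_range,
      List.length_map, List.length_range]
    congr 2
    omega

lemma force_take_sufx (hF : IsCharge M F) (hG : IsCharge M G) {i : ℕ} (hi : i ≤ 2 * M + 1) :
    force ((wordOf M F).take i) (sufx (wordOf M G) i) = -corr F G (2 * M + 1 - i) := by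
  rw [take_wordOf M F hi, sufx_wordOf M G hi, force_map_range, corr_eq_sum_range hF hG,
    ← sum_neg_distrib]
  exact sum_congr rfl fun n _ => lf_ofCharge (hF.abs_le_one _) (hG.abs_le_one _)

lemma force_sufx_take (hF : IsCharge M F) (hG : IsCharge M G) {i : ℕ} (hi : i ≤ 2 * M + 1) :
    force (sufx (wordOf M F) i) ((wordOf M G).take i) = -corr F G (-(2 * M + 1 - i)) := by
  rw [force_comm, force_take_sufx hG hF hi, corr_comm]

lemma force_wordOf (hF : IsCharge M F) (hG : IsCharge M G) :
    force (wordOf M F) (wordOf M G) = -corr F G 0 := by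
  have h := force_take_sufx hF hG le_rfl
  rw [List.take_of_length_le (length_wordOf M F).le, sufx, length_wordOf, Nat.sub_self,
    List.drop_zero] at h
  simpa using h

lemma IsRepelling.aligned_wordOf (h : IsRepelling F G) (hF : IsCharge M F) (hG : IsCharge M G) :
    aligned (wordOf M F) (wordOf M G) := by
  refine ⟨by rw [force_wordOf hF hG, neg_nonpos]; exact h.1 0, fun A hA i hi1 hi2 => ?_⟩
  rw [length_wordOf] at hi2
  have hi : i ≤ 2 * M + 1 := by omega
  rw [reverse_wordOf] at hA
  rcases List.mem_pair.1 hA with rfl | rfl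
  · rw [force_take_sufx hF hG hi, force_sufx_take hF hG hi, neg_nonpos, neg_nonpos]
    exact ⟨h.1 _, h.1 _⟩
  · rw [force_take_sufx hF hG.reflection hi, force_sufx_take hF hG.reflection hi, neg_nonpos,
      neg_nonpos]
    exact ⟨h.2 _ (by omega), h.2 _ (by omega)⟩

lemma attEncodes_wordOf {n : ℕ} {Z : ℕ → ℤ → ℤ} {g : ℕ → ℕ → ℤ} (hZ : ∀ i, IsCharge M (Z i))
    (hrep : ∀ i j, IsRepelling (Z i) (Z j))
    (hg : ∀ i ∈ Icc 1 n, ∀ j ∈ Icc 1 n, corr (Z i) (reflection (Z j)) 0 < 0 ↔ 0 < g i j) :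
    attEncodes n (fun i => wordOf M (Z i)) g := by
  refine ⟨fun i _ j _ => (hrep i j).aligned_wordOf (hZ i) (hZ j), fun i hi j hj => ?_⟩
  rw [reverse_wordOf, force_wordOf (hZ i) (hZ j).reflection, neg_pos]
  exact hg i hi j hj

end Word

/-! ### The canonical signed glue function -/

/-- The sequence `⋆, A 0, B 0, A 1, B 1, …`, whose entries `2 * a + 1` and `2 * a + 2` (the pairs
of the canonical signed glue function) are `A a` and `B a`; the entry at `0` is irrelevant. -/
def interleave {α : Type*} (A B : ℕ → α) (i : ℕ) : α :=
  if Even i then B ((i - 1) / 2) else A ((i - 1) / 2)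

section Glue

variable {N : ℕ} {i j : ℕ}

lemma interleave_two_mul_add_one {α : Type*} (A B : ℕ → α) (a : ℕ) :
    interleave A B (2 * a + 1) = A a := by
  simp [interleave]

lemma interleave_two_mul_add_two {α : Type*} (A B : ℕ → α) (a : ℕ) :
    interleave A B (2 * a + 2) = B a := by
  rw [interleave, if_pos ⟨a + 1, by omega⟩, show (2 * a + 2 - 1) / 2 = a by omega]

lemma exists_eq_of_mem_Icc_two_mul (hi : i ∈ Icc 1 (2 * N)) :
    ∃ a < N, i = 2 * a + 1 ∨ i = 2 * a + 2 := by
  rw [mem_Icc] at hi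
  exact ⟨(i - 1) / 2, by omega, by omega⟩

lemma signedGlue_pos_iff : 0 < signedGlue N i j ↔
    ∃ a < N, (i = 2 * a + 1 ∧ j = 2 * a + 2) ∨ (i = 2 * a + 2 ∧ j = 2 * a + 1) := by
  have hpos : 0 < signedGlue N i j ↔
      ∃ a ∈ Icc 1 N, (i = 2 * a - 1 ∧ j = 2 * a) ∨ (i = 2 * a ∧ j = 2 * a - 1) := by
    unfold signedGlue
    split_ifs with h
    exacts [iff_of_true one_pos h, iff_of_false (lt_irrefl 0) h]
  rw [hpos]
  constructor
  · rintro ⟨a, ha, h⟩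
    rw [mem_Icc] at ha
    exact ⟨a - 1, by omega, by omega⟩
  · rintro ⟨a, ha, h⟩
    exact ⟨a + 1, mem_Icc.2 (by omega), by omega⟩

lemma corr_interleave_neg_iff_signedGlue_pos {A B : ℕ → ℤ → ℤ}
    (hA : ∀ a b, 0 ≤ corr (A a) (reflection (A b)) 0)
    (hB : ∀ a b, 0 ≤ corr (B a) (reflection (B b)) 0)
    (hAB : ∀ a < N, ∀ b < N, corr (A a) (reflection (B b)) 0 < 0 ↔ a = b)
    (hi : i ∈ Icc 1 (2 * N)) (hj : j ∈ Icc 1 (2 * N)) :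
    corr (interleave A B i) (reflection (interleave A B j)) 0 < 0 ↔ 0 < signedGlue N i j := by
  obtain ⟨a, ha, rfl | rfl⟩ := exists_eq_of_mem_Icc_two_mul hi <;>
    obtain ⟨b, hb, rfl | rfl⟩ := exists_eq_of_mem_Icc_two_mul hj <;>
    simp only [interleave_two_mul_add_one, interleave_two_mul_add_two, signedGlue_pos_iff]
  · exact iff_of_false (hA a b).not_gt (by omega)
  · rw [hAB a ha b hb]
    exact ⟨fun h => ⟨a, ha, by omega⟩, by omega⟩
  · rw [corr_reflection_comm, hAB b hb a ha]
    exact ⟨fun h => ⟨a, ha, by omega⟩, by omega⟩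
  · exact iff_of_false (hB a b).not_gt (by omega)

lemma attEncodes_wordOf_interleave {M : ℕ} {A B : ℕ → ℤ → ℤ}
    (hA : ∀ a, IsCharge M (A a)) (hB : ∀ b, IsCharge M (B b))
    (hAA : ∀ a b s, 0 ≤ corr (A a) (A b) s)
    (hAA' : ∀ a b s, 0 ≤ corr (A a) (reflection (A b)) s)
    (hBB : ∀ a b s, 0 ≤ corr (B a) (B b) s)
    (hBB' : ∀ a b s, 0 ≤ corr (B a) (reflection (B b)) s)
    (hAB : ∀ a b, IsRepelling (A a) (B b))
    (hglue : ∀ a < N, ∀ b < N, corr (A a) (reflection (B b)) 0 < 0 ↔ a = b) :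
    attEncodes (2 * N) (fun i => wordOf M (interleave A B i)) (signedGlue N) := by
  refine attEncodes_wordOf (fun i => ?_) (fun i j => ?_) fun i hi j hj =>
    corr_interleave_neg_iff_signedGlue_pos (hAA' · · 0) (hBB' · · 0) hglue hi hj
  · unfold interleave
    split_ifs
    exacts [hB _, hA _]
  · unfold interleave
    split_ifs
    exacts [⟨hBB _ _, fun s _ => hBB' _ _ s⟩, (hAB _ _).symm, hAB _ _,
      ⟨hAA _ _, fun s _ => hAA' _ _ s⟩]

end Glue

/-! ### Probes and plates -/

/-- The probe of the information block `u ⊆ [-q, q]`: charge `1` on `u`, on a lone place `4q`, and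
on the run `[6q+1, 7q)` of length `q - 1`. -/
noncomputable def probe (q : ℕ) (u : Finset ℤ) : ℤ → ℤ :=
  ((u ∪ insert (4 * q : ℤ) (Ico (6 * q + 1 : ℤ) (7 * q)) : Finset ℤ) : Set ℤ).indicator 1

/-- The plate of the information block `v ⊆ [-q, q]`: charge `1` on `[-M, M]`, except for a hole
at `γ` and for the places of `[-q, q]`, which carry charge `-1` on `v` and no charge elsewhere. -/
def plate (M q : ℕ) (γ : ℤ) (v : Finset ℤ) (x : ℤ) : ℤ :=
  if |x| ≤ q then if x ∈ v then -1 else 0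
  else if |x| ≤ M ∧ x ≠ γ then 1 else 0

section Probe

variable {M q : ℕ} {u : Finset ℤ}

lemma probe_nonneg (q : ℕ) (u : Finset ℤ) (x : ℤ) : 0 ≤ probe q u x :=
  Set.indicator_nonneg (fun _ _ => zero_le_one) x

lemma isCharge_probe (hM : 7 * q ≤ M) (hu : u ⊆ Icc (-(q : ℤ)) q) : IsCharge M (probe q u) := by
  refine ⟨fun x => ?_, fun x hx => Set.indicator_of_notMem (fun hmem => ?_) 1⟩
  · rw [probe, Set.indicator_apply]
    split_ifs <;> simp
  · simp only [mem_coe, mem_union, mem_insert, mem_Ico] at hmem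
    rw [lt_abs] at hx
    rcases hmem with h | h
    · have := mem_Icc.1 (hu h)
      omega
    · omega

lemma corr_probe (hq : 0 < q) (hu : u ⊆ Icc (-(q : ℤ)) q) (G : ℤ → ℤ) (s : ℤ) :
    corr (probe q u) G s =
      ∑ x ∈ u, G (x + s) + (G (4 * q + s) + ∑ x ∈ Ico (6 * q + 1 : ℤ) (7 * q), G (x + s)) := by
  rw [probe, corr_indicator_one, sum_union, sum_insert]
  · rw [mem_Ico]
    omega
  · refine disjoint_left.2 fun x hx => ?_
    have := mem_Icc.1 (hu hx)
    rw [mem_insert, mem_Ico]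
    omega

lemma card_run (hq : 0 < q) : (#(Ico (6 * q + 1 : ℤ) (7 * q)) : ℤ) = q - 1 := by
  rw [Int.card_Ico]
  omega

end Probe

section Plate

variable {M q : ℕ} {γ δ : ℤ} {u v w S : Finset ℤ} {s x : ℤ}

lemma reflection_plate (M q : ℕ) (γ : ℤ) (v : Finset ℤ) :
    reflection (plate M q γ v) = plate M q (-γ) (-v) := by
  funext x
  simp only [reflection, plate, abs_neg, mem_neg', ne_eq, neg_eq_iff_eq_neg]

lemma neg_one_le_plate (x : ℤ) : -1 ≤ plate M q γ v x := by
  unfold plate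
  split_ifs <;> norm_num

lemma plate_nonneg (hx : q < |x|) : 0 ≤ plate M q γ v x := by
  rw [plate, if_neg hx.not_ge]
  split_ifs <;> norm_num

lemma plate_eq_one (hx : q < |x|) (hM : |x| ≤ M) (hγ : x ≠ γ) : plate M q γ v x = 1 := by
  rw [plate, if_neg hx.not_ge, if_pos ⟨hM, hγ⟩]

lemma plate_eq_zero (hx : q < |x|) (hM : M < |x|) : plate M q γ v x = 0 := by
  rw [plate, if_neg hx.not_ge, if_neg fun h => hM.not_ge h.1]

lemma isCharge_plate (hM : q ≤ M) (γ : ℤ) (v : Finset ℤ) : IsCharge M (plate M q γ v) := by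
  refine ⟨fun x => ?_, fun x hx => plate_eq_zero (by omega) hx⟩
  unfold plate
  split_ifs <;> simp

lemma neg_card_le_sum_plate (S : Finset ℤ) (s : ℤ) :
    -(#S : ℤ) ≤ ∑ x ∈ S, plate M q γ v (x + s) := by
  simpa using card_nsmul_le_sum S (fun x => plate M q γ v (x + s)) (-1)
    fun x _ => neg_one_le_plate _

lemma sum_plate_nonneg (hS : ∀ x ∈ S, q < |x + s|) : 0 ≤ ∑ x ∈ S, plate M q γ v (x + s) :=
  sum_nonneg fun x hx => plate_nonneg (hS x hx)

lemma sum_plate_eq_card (hS : ∀ x ∈ S, q < |x + s|) (hM : ∀ x ∈ S, |x + s| ≤ M)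
    (hγ : ∀ x ∈ S, x + s ≠ γ) : ∑ x ∈ S, plate M q γ v (x + s) = #S := by
  rw [sum_congr rfl fun x hx => plate_eq_one (hS x hx) (hM x hx) (hγ x hx), sum_const,
    nsmul_eq_mul, mul_one]

lemma card_sub_one_le_sum_plate (hS : ∀ x ∈ S, q < |x + s|) (hM : ∀ x ∈ S, |x + s| ≤ M) :
    (#S : ℤ) - 1 ≤ ∑ x ∈ S, plate M q γ v (x + s) := by
  have hsub : S.erase (γ - s) ⊆ S := erase_subset _ _
  calc (#S : ℤ) - 1
      ≤ #(S.erase (γ - s)) := by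
        have := pred_card_le_card_erase (s := S) (a := γ - s)
        omega
    _ = ∑ x ∈ S.erase (γ - s), plate M q γ v (x + s) :=
        (sum_plate_eq_card (fun x hx => hS x (hsub hx)) (fun x hx => hM x (hsub hx))
          fun x hx h => (mem_erase.1 hx).1 (by omega)).symm
    _ ≤ ∑ x ∈ S, plate M q γ v (x + s) :=
        sum_le_sum_of_subset_of_nonneg hsub fun x hx _ => plate_nonneg (hS x hx)

-- The lone charge and the run outweigh the information block.
lemma corr_probe_plate_nonneg_of_near (hq : 0 < q) (hM : 9 * q ≤ M) (hu : u ⊆ Icc (-(q : ℤ)) q)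
    (hcard : #u = q) (hγ : γ ≤ 4 * q) (hs : |s| ≤ 2 * q) (hγs : 4 * q + s ≠ γ) :
    0 ≤ corr (probe q u) (plate M q γ v) s := by
  rw [abs_le] at hs
  have hinfo : -(q : ℤ) ≤ ∑ x ∈ u, plate M q γ v (x + s) := hcard ▸ neg_card_le_sum_plate u s
  have hlone : plate M q γ v (4 * q + s) = 1 :=
    plate_eq_one (lt_abs.2 (by omega)) (abs_le.2 (by omega)) hγs
  have hrun : ∑ x ∈ Ico (6 * q + 1 : ℤ) (7 * q), plate M q γ v (x + s) = q - 1 := by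
    rw [← card_run hq]
    refine sum_plate_eq_card ?_ ?_ ?_ <;> intro x hx <;> rw [mem_Ico] at hx
    exacts [lt_abs.2 (by omega), abs_le.2 (by omega), by omega]
  rw [corr_probe hq hu]
  linarith

-- No part of the probe meets the information block of the plate.
lemma corr_probe_plate_nonneg_of_far (hq : 0 < q) (hu : u ⊆ Icc (-(q : ℤ)) q)
    (hs : 2 * q < s ∨ s < -(8 * q)) : 0 ≤ corr (probe q u) (plate M q γ v) s := by
  rw [corr_probe hq hu]
  refine add_nonneg (sum_plate_nonneg fun x hx => ?_)
    (add_nonneg (plate_nonneg (lt_abs.2 (by omega))) (sum_plate_nonneg fun x hx => ?_))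
  · have := mem_Icc.1 (hu hx)
    exact lt_abs.2 (by omega)
  · rw [mem_Ico] at hx
    exact lt_abs.2 (by omega)

-- The information block of the probe contributes at least `q - 1`; of its lone charge and its run,
-- only one can meet the information block of the plate.
lemma corr_probe_plate_nonneg_of_mid (hq : 2 ≤ q) (hM : 9 * q ≤ M) (hu : u ⊆ Icc (-(q : ℤ)) q)
    (hcard : #u = q) (hs : -(8 * q) ≤ s) (hs' : s < -(2 * q)) :
    0 ≤ corr (probe q u) (plate M q γ v) s := by
  have hinfo : (q : ℤ) - 1 ≤ ∑ x ∈ u, plate M q γ v (x + s) := by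
    rw [← hcard]
    refine card_sub_one_le_sum_plate ?_ ?_ <;> intro x hx <;> have := mem_Icc.1 (hu hx)
    exacts [lt_abs.2 (by omega), abs_le.2 (by omega)]
  rw [corr_probe (by omega) hu]
  rcases le_or_gt (-(5 * q : ℤ)) s with h5 | h5
  · have hlone : -1 ≤ plate M q γ v (4 * q + s) := neg_one_le_plate _
    have hrun : 0 ≤ ∑ x ∈ Ico (6 * q + 1 : ℤ) (7 * q), plate M q γ v (x + s) :=
      sum_plate_nonneg fun x hx => lt_abs.2 (by rw [mem_Ico] at hx; omega)
    omega
  · have hlone : 0 ≤ plate M q γ v (4 * q + s) := plate_nonneg (lt_abs.2 (by omega))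
    have hrun : -((q : ℤ) - 1) ≤ ∑ x ∈ Ico (6 * q + 1 : ℤ) (7 * q), plate M q γ v (x + s) :=
      card_run (q := q) (by omega) ▸ neg_card_le_sum_plate _ s
    omega

lemma corr_probe_plate_nonneg (hq : 2 ≤ q) (hM : 9 * q ≤ M) (hu : u ⊆ Icc (-(q : ℤ)) q)
    (hcard : #u = q) (hγ : γ ≤ 4 * q) (hγs : |s| ≤ 2 * q → 4 * q + s ≠ γ) :
    0 ≤ corr (probe q u) (plate M q γ v) s := by
  by_cases hs : |s| ≤ 2 * q
  · exact corr_probe_plate_nonneg_of_near (by omega) hM hu hcard hγ hs (hγs hs)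
  · rw [abs_le] at hs
    by_cases hfar : 2 * q < s ∨ s < -(8 * q)
    · exact corr_probe_plate_nonneg_of_far (by omega) hu hfar
    · exact corr_probe_plate_nonneg_of_mid hq hM hu hcard (by omega) (by omega)

lemma corr_probe_plate_zero (hq : 0 < q) (hM : 7 * q ≤ M) (hu : u ⊆ Icc (-(q : ℤ)) q) :
    corr (probe q u) (plate M q (4 * q) v) 0 = q - 1 - #(u ∩ v) := by
  have hinfo : ∑ x ∈ u, plate M q (4 * q) v x = -#(u ∩ v) := by
    rw [← filter_mem_eq_inter, ← sum_boole, ← sum_neg_distrib]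
    refine sum_congr rfl fun x hx => ?_
    rw [plate, if_pos (abs_le.2 (mem_Icc.1 (hu hx)))]
    split_ifs <;> rfl
  have hlone : plate M q (4 * q) v (4 * q) = 0 := by
    rw [plate, if_neg (lt_abs.2 (by omega)).not_ge, if_neg fun h => h.2 rfl]
  have hrun : ∑ x ∈ Ico (6 * q + 1 : ℤ) (7 * q), plate M q (4 * q) v (x + 0) = q - 1 := by
    rw [← card_run hq]
    refine sum_plate_eq_card ?_ ?_ ?_ <;> intro x hx <;> rw [mem_Ico] at hx
    exacts [lt_abs.2 (by omega), abs_le.2 (by omega), by omega]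
  rw [corr_probe hq hu, hrun]
  simp only [add_zero, hinfo, hlone]
  ring

lemma corr_probe_plate_zero_neg_iff (hq : 0 < q) (hM : 7 * q ≤ M) (hu : u ⊆ Icc (-(q : ℤ)) q)
    (hcu : #u = q) (hcv : #v = q) : corr (probe q u) (plate M q (4 * q) v) 0 < 0 ↔ u = v := by
  rw [corr_probe_plate_zero hq hM hu]
  constructor
  · intro h
    have hinter : u ∩ v = u := eq_of_subset_of_card_le inter_subset_left (by omega)
    exact eq_of_subset_of_card_le (inter_eq_left.1 hinter) (by omega)
  · rintro rfl
    rw [inter_self]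
    omega

lemma corr_plate_plate_nonneg_of_far (hM : q ≤ M) (hs : M + q < s) :
    0 ≤ corr (plate M q γ v) (plate M q δ w) s := by
  refine finsum_nonneg fun x => ?_
  by_cases hx : |x| ≤ q
  · have hxs : M < |x + s| := lt_abs.2 (by rw [abs_le] at hx; omega)
    rw [plate_eq_zero (by omega) hxs, mul_zero]
  · by_cases hxs : |x + s| ≤ q
    · have hx' : M < |x| := lt_abs.2 (by rw [abs_le] at hxs; omega)
      rw [plate_eq_zero (by omega) hx', zero_mul]
    · exact mul_nonneg (plate_nonneg (not_le.1 hx)) (plate_nonneg (not_le.1 hxs))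

-- On the left wing `[-M, -q)` of the first plate almost all products are `1`, and only the two
-- information blocks, with `2 * q + 1` places each, can produce `-1`.
lemma corr_plate_plate_nonneg_of_near (hM : 7 * q + 5 ≤ M) (hs : 0 ≤ s) (hs' : s ≤ M + q) :
    0 ≤ corr (plate M q γ v) (plate M q δ w) s := by
  set wing := Ico (-(M : ℤ)) (-q)
  set block := Icc (-(q : ℤ)) q
  set block' := Icc (-s - q) (-s + q)
  set holes : Finset ℤ := {γ, δ - s}
  have hv : IsCharge M (plate M q γ v) := isCharge_plate (by omega) γ v
  have hw : IsCharge M (plate M q δ w) := isCharge_plate (by omega) δ w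
  have hone : ∀ x ∈ wing \ (block' ∪ holes),
      1 ≤ plate M q γ v x * plate M q δ w (x + s) := fun x hx => by
    simp only [wing, block', holes, mem_sdiff, mem_union, mem_insert, mem_singleton, mem_Ico,
      mem_Icc] at hx
    rw [plate_eq_one (lt_abs.2 (by omega)) (abs_le.2 (by omega)) (by omega),
      plate_eq_one (lt_abs.2 (by omega)) (abs_le.2 (by omega)) (by omega), one_mul]
  have hneg_one : ∀ x ∈ block ∪ block',
      -1 ≤ plate M q γ v x * plate M q δ w (x + s) := fun x _ => by
    refine (abs_le.1 ?_).1
    rw [abs_mul]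
    exact mul_le_one₀ (hv.abs_le_one x) (abs_nonneg _) (hw.abs_le_one (x + s))
  have hnonneg : ∀ x ∉ block ∪ block',
      0 ≤ plate M q γ v x * plate M q δ w (x + s) := fun x hx => by
    simp only [block, block', mem_union, mem_Icc] at hx
    exact mul_nonneg (plate_nonneg (lt_abs.2 (by omega))) (plate_nonneg (lt_abs.2 (by omega)))
  have hle : (#(wing \ (block' ∪ holes)) : ℤ) - #(block ∪ block') ≤
      corr (plate M q γ v) (plate M q δ w) s :=
    card_sub_card_le_finsum (hv.finite_support_mul fun x => plate M q δ w (x + s)) hone hneg_one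
      hnonneg
  have hwing : #wing = M - q := by rw [Int.card_Ico]; omega
  have hblock : #block = 2 * q + 1 := by rw [Int.card_Icc]; omega
  have hblock' : #block' = 2 * q + 1 := by rw [Int.card_Icc]; omega
  have hholes : #holes ≤ 2 := card_le_two
  have hgood := card_le_card_sdiff_add_card (s := wing) (t := block' ∪ holes)
  have hexcluded := card_union_le block' holes
  have hbad := card_union_le block block'
  omega

lemma corr_plate_plate_nonneg (hM : 7 * q + 5 ≤ M) (s : ℤ) :
    0 ≤ corr (plate M q γ v) (plate M q δ w) s := by
  wlog hs : 0 ≤ s generalizing γ δ v w s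
  · rw [corr_comm]
    exact this (-s) (by omega)
  · rcases le_or_gt s (M + q) with hs' | hs'
    · exact corr_plate_plate_nonneg_of_near hM hs hs'
    · exact corr_plate_plate_nonneg_of_far (by omega) hs'

end Plate

/-! ### The encoding -/

lemma exists_injOn_of_card_le_card {ι α : Type*} {T : Finset ι} {S : Finset α} (hS : S.Nonempty)
    (h : #T ≤ #S) : ∃ U : ι → α, (∀ a, U a ∈ S) ∧ Set.InjOn U T := by
  have := hS.to_subtype
  obtain ⟨U, -, hU⟩ := T.finite_toSet.exists_injOn_of_encard_le (t := (Set.univ : Set S))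
    (by simpa [Set.encard_univ] using h)
  exact ⟨fun a => U a, fun a => (U a).2, fun a ha b hb hab => hU ha hb (Subtype.ext hab)⟩

lemma attEncodes_probe_plate {M q N : ℕ} {U : ℕ → Finset ℤ} (hq : 2 ≤ q) (hM : 10 * q ≤ M)
    (hU : ∀ a, U a ∈ powersetCard q (Icc (-(q : ℤ)) q)) (hinj : Set.InjOn U (range N)) :
    attEncodes (2 * N)
      (fun i => wordOf M (interleave (fun a => probe q (U a))
        (fun a => reflection (plate M q (4 * q) (U a))) i)) (signedGlue N) := by
  have hsub (a : ℕ) : U a ⊆ Icc (-(q : ℤ)) q := (mem_powersetCard.1 (hU a)).1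
  have hcard (a : ℕ) : #(U a) = q := (mem_powersetCard.1 (hU a)).2
  refine attEncodes_wordOf_interleave (fun a => isCharge_probe (by omega) (hsub a))
    (fun b => (isCharge_plate (by omega) _ _).reflection)
    (fun a b => corr_nonneg (probe_nonneg q _) (probe_nonneg q _))
    (fun a b => corr_nonneg (probe_nonneg q _) fun x => probe_nonneg q _ (-x))
    (fun a b s => ?_) (fun a b s => ?_) (fun a b => ⟨fun s => ?_, fun s hs => ?_⟩)
    fun a ha b hb => ?_
  · rw [reflection_plate, reflection_plate]
    exact corr_plate_plate_nonneg (by omega) s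
  · rw [reflection_reflection, reflection_plate]
    exact corr_plate_plate_nonneg (by omega) s
  · rw [reflection_plate]
    exact corr_probe_plate_nonneg hq (by omega) (hsub a) (hcard a) (by omega)
      fun h => by rw [abs_le] at h; omega
  · rw [reflection_reflection]
    exact corr_probe_plate_nonneg hq (by omega) (hsub a) (hcard a) le_rfl fun _ => by omega
  · rw [reflection_reflection,
      corr_probe_plate_zero_neg_iff (by omega) (by omega) (hsub a) (hcard a) (hcard b)]
    exact hinj.eq_iff (mem_range.2 ha) (mem_range.2 hb)

theorem stmt5_general (k M : ℕ) (hk : 4 ≤ k) (hM : 5 * k ≤ M) :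
    ∃ W : ℕ → List Dip,
      (∀ i ∈ Finset.Icc 1 (2 * Nat.choose k (k / 2)), (W i).length = 2 * M + 1) ∧
      attEncodes (2 * Nat.choose k (k / 2)) W (signedGlue (Nat.choose k (k / 2))) := by
  set q := k / 2
  set blocks := powersetCard q (Icc (-(q : ℤ)) q)
  have hcard : #blocks = (2 * q + 1).choose q := by
    rw [card_powersetCard, Int.card_Icc]
    congr 1
    omega
  have hblocks : blocks.Nonempty := card_pos.1 (hcard ▸ Nat.choose_pos (by omega))
  have hle : #(range (k.choose q)) ≤ #blocks := by
    rw [card_range, hcard]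
    exact Nat.choose_le_choose q (by omega)
  obtain ⟨U, hU, hinj⟩ := exists_injOn_of_card_le_card hblocks hle
  exact ⟨_, fun i _ => length_wordOf M _, attEncodes_probe_plate (by omega) (by omega) hU hinj⟩

/-- For every positive integer `k` divisible by 4, there is a set of `2·C(k, k/2)` dipole
words, each of length `20k+3`, attractively encoding the canonical signed
`2·C(k, k/2)`-glue function. -/
theorem stmt5 (k : ℕ) (hk : 0 < k) (h4 : 4 ∣ k) :
    ∃ W : ℕ → List Dip,
      (∀ i ∈ Finset.Icc 1 (2 * Nat.choose k (k / 2)), (W i).length = 20 * k + 3) ∧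
      attEncodes (2 * Nat.choose k (k / 2)) W (signedGlue (Nat.choose k (k / 2))) := by
  rw [show 20 * k + 3 = 2 * (10 * k + 1) + 1 by ring]
  exact stmt5_general k (10 * k + 1) (Nat.le_of_dvd hk h4) (by omega)
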